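/- Let Γ be a countable discrete group, N a finite normal subgroup of Γ, π : Γ → Γ/N the quotient homomorphism, μ a generating probability measure on Γ, and μ̄ its pushforward to Γ/N (so μ̄(c) = ∑_{x : π(x)=c} μ(x)). Then the map f ↦ f∘π is a bijection from the set of bounded μ̄-harmonic functions Γ/N → ℂ onto the set of bounded μ-harmonic functions Γ → ℂ. -/

import Mathlib

/-- Convolution of two (signed) measures on a discrete group:
`(μ ∗ ν)(x) = ∑_y μ(y) ν(y⁻¹ x)`. -/
noncomputable def conv {G : Type*} [Group G] (μ ν : G → ℝ) : G → ℝ :=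
  fun x => ∑' y, μ y * ν (y⁻¹ * x)

/-- Convolution powers: `μ^{*0} = δ_e`, `μ^{*(n+1)} = μ^{*n} ∗ μ`. -/
noncomputable def convPow {G : Type*} [Group G] (μ : G → ℝ) : ℕ → G → ℝ
  | 0 => Set.indicator ({1} : Set G) (fun _ => (1 : ℝ))
  | n + 1 => conv (convPow μ n) μ

/-- A measure `μ` is generating if every point gets positive mass from some
convolution power `μ^{*n}`, `n ≥ 1`. -/
def IsGenerating {G : Type*} [Group G] (μ : G → ℝ) : Prop :=
  ∀ x : G, ∃ n : ℕ, 1 ≤ n ∧ 0 < convPow μ n x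

/-- The pushforward of a measure `μ` on `Γ` to the quotient group `Γ/N`:
`μ̄(c) = ∑_{x : π(x) = c} μ(x)`. -/
noncomputable def pushforward {Γ : Type*} [Group Γ] (N : Subgroup Γ) [N.Normal]
    (μ : Γ → ℝ) : Γ ⧸ N → ℝ :=
  fun c => ∑' x : {x : Γ // (QuotientGroup.mk x : Γ ⧸ N) = c}, μ x

/-!
A bounded harmonic function on `Γ` descends to `Γ ⧸ N` once it is invariant under left
translation by `N`, and by duality this need only be proved for real-valued `f`. Among the finitely
many conjugates of `a ∈ N`, choose `b` for which `S = sup_x (f(bx) - f(x))` is largest, and let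
`f(b uᵢ) - f(uᵢ) → S`. The gap `y ↦ S - (f(y b uᵢ) - f(y uᵢ))` is harmonic, and it is nonnegative
because `f(y b x) - f(y x)` is an increment of `f` along the conjugate `y b y⁻¹`. By Harnack's
inequality it tends to `0` at `y = b`, so `b uᵢ` is again an almost maximising sequence. Iterating,
`f(bᵐ uᵢ) - f(uᵢ) → m S` for every `m`, and boundedness of `f` forces `S ≤ 0`.
-/

/-- A function `f` is `μ`-harmonic if `∑_h μ(h) f(hx) = f(x)` for every `x`. Writing this with
`HasSum` makes unconditional convergence of the sum part of the notion. -/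
def IsHarmonic {G E : Type*} [Group G] [AddCommMonoid E] [TopologicalSpace E] [SMul ℝ E]
    (μ : G → ℝ) (f : G → E) : Prop :=
  ∀ x, HasSum (fun h => μ h • f (h * x)) (f x)

/-- The bounded `μ`-harmonic functions with values in a normed space `E`, as a set of functions. -/
def boundedHarmonic {G : Type*} [Group G] (μ : G → ℝ) (E : Type*) [NormedAddCommGroup E]
    [NormedSpace ℝ E] : Set (G → E) :=
  {f | (∃ C : ℝ, ∀ x, ‖f x‖ ≤ C) ∧ IsHarmonic μ f}

section Convolution

variable {G : Type*} [Group G] {μ ν : G → ℝ}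

theorem conv_nonneg (hμ : ∀ x, 0 ≤ μ x) (hν : ∀ x, 0 ≤ ν x) (x : G) : 0 ≤ conv μ ν x :=
  tsum_nonneg fun y => mul_nonneg (hμ y) (hν _)

theorem convPow_nonneg (hμ : ∀ x, 0 ≤ μ x) (n : ℕ) : ∀ x, 0 ≤ convPow μ n x := by
  induction n with
  | zero => exact Set.indicator_nonneg fun _ _ => zero_le_one
  | succ n ih => exact conv_nonneg ih hμ

end Convolution

namespace IsHarmonic

variable {G : Type*} [Group G] {μ ν : G → ℝ}

theorem comp_mul_right {E : Type*} [AddCommMonoid E] [TopologicalSpace E] [SMul ℝ E] {f : G → E}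
    (hf : IsHarmonic μ f) (z : G) : IsHarmonic μ (fun x => f (x * z)) := fun x => by
  simpa only [mul_assoc] using hf (x * z)

protected theorem const {E : Type*} [AddCommMonoid E] [TopologicalSpace E] [Module ℝ E]
    [ContinuousSMul ℝ E] (hμ1 : HasSum μ 1) (v : E) : IsHarmonic μ (fun _ : G => v) := fun _ => by
  simpa only [one_smul] using hμ1.smul_const v

protected theorem sub {E : Type*} [AddCommGroup E] [TopologicalSpace E] [IsTopologicalAddGroup E]
    [Module ℝ E] {f g : G → E} (hf : IsHarmonic μ f) (hg : IsHarmonic μ g) :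
    IsHarmonic μ (fun x => f x - g x) := fun x => by
  simpa only [smul_sub] using (hf x).sub (hg x)

theorem continuousLinearMap_comp {E F : Type*} [AddCommMonoid E] [TopologicalSpace E] [Module ℝ E]
    [AddCommMonoid F] [TopologicalSpace F] [Module ℝ F] {f : G → E} (hf : IsHarmonic μ f)
    (φ : E →L[ℝ] F) : IsHarmonic μ (fun x => φ (f x)) := fun x => by
  simpa only [map_smul] using φ.hasSum (hf x)

protected theorem conv {w : G → ℝ} (hμ : ∀ x, 0 ≤ μ x) (hν : ∀ x, 0 ≤ ν x) (hw : ∀ x, 0 ≤ w x)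
    (hμw : IsHarmonic μ w) (hνw : IsHarmonic ν w) : IsHarmonic (conv μ ν) w := by
  intro x
  let F : G × G → ℝ := fun p => ν p.1 * (μ p.2 * w (p.2 * (p.1 * x)))
  have fiber (z : G) : HasSum (fun y => F (z, y)) (ν z * w (z * x)) := (hμw (z * x)).mul_left _
  have hF : Summable F := by
    refine (summable_prod_of_nonneg fun p => ?_).2 ⟨fun z => (fiber z).summable, ?_⟩
    · exact mul_nonneg (hν _) (mul_nonneg (hμ _) (hw _))
    · simpa only [(fiber _).tsum_eq] using! (hνw x).summable
  have hFx : HasSum F (w x) :=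
    (hF.hasSum.prod_fiberwise fiber).unique (hνw x) ▸ hF.hasSum
  let e : G × G ≃ G × G :=
    { toFun := fun p => (p.2⁻¹ * p.1, p.2)
      invFun := fun p => (p.2 * p.1, p.2)
      left_inv := fun p => by simp
      right_inv := fun p => by simp }
  have hFe : HasSum (fun p : G × G => μ p.2 * ν (p.2⁻¹ * p.1) * w (p.1 * x)) (w x) := by
    convert e.hasSum_iff.2 hFx using 2 with p
    simp only [F, e, Function.comp_apply, Equiv.coe_fn_mk, ← mul_assoc, mul_inv_cancel, one_mul]
    ring
  refine hFe.prod_fiberwise fun h => ?_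
  simpa only [conv, smul_eq_mul, tsum_mul_right] using
    (hFe.summable.prod_factor h).hasSum

protected theorem convPow {w : G → ℝ} (hμ : ∀ x, 0 ≤ μ x) (hw : ∀ x, 0 ≤ w x) (hμw : IsHarmonic μ w)
    (n : ℕ) : IsHarmonic (convPow μ n) w := by
  induction n with
  | zero =>
    intro x
    simpa [convPow] using
      hasSum_single (f := fun h => Set.indicator {1} (fun _ => (1 : ℝ)) h • w (h * x)) 1
        fun h hh => by simp [hh]
  | succ n ih => exact ih.conv (convPow_nonneg hμ n) hμ hw hμw

theorem convPow_mul_apply_le {w : G → ℝ} (hμ : ∀ x, 0 ≤ μ x) (hw : ∀ x, 0 ≤ w x)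
    (hμw : IsHarmonic μ w) (n : ℕ) (g x : G) : convPow μ n g * w (g * x) ≤ w x :=
  le_hasSum (hμw.convPow hμ hw n x) g fun _ _ => mul_nonneg (convPow_nonneg hμ n _) (hw _)

end IsHarmonic

section Increments

open Filter Topology

variable {G : Type*} [Group G] {μ : G → ℝ} {f : G → ℝ}

theorem IsHarmonic.tendsto_increment {ι : Type*} {l : Filter ι} (hμ0 : ∀ x, 0 ≤ μ x)
    (hμ1 : HasSum μ 1) (hf : IsHarmonic μ f) {b : G} {S : ℝ}
    (hS : ∀ y x, f (y * (b * x)) - f (y * x) ≤ S) {u : ι → G}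
    (hu : Tendsto (fun i => f (b * u i) - f (u i)) l (𝓝 S)) {n : ℕ} {g : G}
    (hg : 0 < convPow μ n g) :
    Tendsto (fun i => f (g * (b * u i)) - f (g * u i)) l (𝓝 S) := by
  let gap (i : ι) (y : G) : ℝ := S - (f (y * (b * u i)) - f (y * u i))
  have gap_nonneg (i : ι) (y : G) : 0 ≤ gap i y := sub_nonneg.2 (hS y (u i))
  have gap_harmonic (i : ι) : IsHarmonic μ (gap i) :=
    (IsHarmonic.const hμ1 S).sub ((hf.comp_mul_right _).sub (hf.comp_mul_right _))
  have gap_le (i : ι) : gap i g ≤ gap i 1 / convPow μ n g := by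
    have harnack := (gap_harmonic i).convPow_mul_apply_le hμ0 (gap_nonneg i) n g 1
    rwa [mul_one, mul_comm, ← le_div_iff₀ hg] at harnack
  have gap_one : Tendsto (fun i => gap i 1 / convPow μ n g) l (𝓝 0) := by
    simpa [gap] using (hu.const_sub S).div_const (convPow μ n g)
  have gap_tendsto : Tendsto (fun i => gap i g) l (𝓝 0) :=
    squeeze_zero (fun i => gap_nonneg i g) gap_le gap_one
  simpa [gap] using gap_tendsto.const_sub S

theorem IsHarmonic.increment_limit_nonpos {ι : Type*} {l : Filter ι} [l.NeBot]
    (hμ0 : ∀ x, 0 ≤ μ x) (hμ1 : HasSum μ 1) (hf : IsHarmonic μ f) {C : ℝ} (hC : ∀ x, |f x| ≤ C)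
    {b : G} {n : ℕ} (hb : 0 < convPow μ n b) {S : ℝ}
    (hS : ∀ y x, f (y * (b * x)) - f (y * x) ≤ S) {u : ι → G}
    (hu : Tendsto (fun i => f (b * u i) - f (u i)) l (𝓝 S)) : S ≤ 0 := by
  have increment (j : ℕ) : Tendsto (fun i => f (b ^ (j + 1) * u i) - f (b ^ j * u i)) l (𝓝 S) := by
    induction j with
    | zero => simpa using hu
    | succ j ih =>
      simp only [pow_succ', mul_assoc] at ih ⊢
      exact hf.tendsto_increment hμ0 hμ1 hS ih hb
  have total (m : ℕ) : Tendsto (fun i => f (b ^ m * u i) - f (u i)) l (𝓝 (m * S)) := by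
    have h := tendsto_finsetSum (Finset.range m) fun j _ => increment j
    simp only [Finset.sum_const, Finset.card_range, nsmul_eq_mul] at h
    refine h.congr fun i => ?_
    simpa using Finset.sum_range_sub (fun j => f (b ^ j * u i)) m
  have mul_le (m : ℕ) : m * S ≤ 2 * C := by
    refine le_of_tendsto (total m) (Eventually.of_forall fun i => ?_)
    linarith [(abs_le.1 (hC (b ^ m * u i))).2, (abs_le.1 (hC (u i))).1]
  by_contra! hSpos
  obtain ⟨m, hm⟩ := Archimedean.arch (2 * C + 1) hSpos
  rw [nsmul_eq_mul] at hm
  linarith [mul_le m]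

theorem IsHarmonic.apply_mul_le (hμ0 : ∀ x, 0 ≤ μ x) (hμ1 : HasSum μ 1) (hf : IsHarmonic μ f)
    {C : ℝ} (hC : ∀ x, |f x| ≤ C) {a : G} (ha : (conjugatesOf a).Finite)
    (hreach : ∀ b ∈ conjugatesOf a, ∃ n, 0 < convPow μ n b) (x : G) :
    f (a * x) ≤ f x := by
  let incr (b x : G) : ℝ := f (b * x) - f x
  have incr_bdd (b : G) : BddAbove (Set.range (incr b)) := by
    refine ⟨2 * C, Set.forall_mem_range.2 fun x => ?_⟩
    linarith [(abs_le.1 (hC (b * x))).2, (abs_le.1 (hC x)).1]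
  obtain ⟨b, hba, hmax⟩ :=
    Set.exists_max_image _ (fun b => ⨆ x, incr b x) ha ⟨a, mem_conjugatesOf_self⟩
  have incr_le {c : G} (hc : c ∈ conjugatesOf a) (x : G) : incr c x ≤ ⨆ x, incr b x :=
    (le_ciSup (incr_bdd c) x).trans (hmax c hc)
  have shifted_le (y x : G) : f (y * (b * x)) - f (y * x) ≤ ⨆ x, incr b x := by
    have hconj : y * b * y⁻¹ ∈ conjugatesOf a := hba.trans (isConj_iff.2 ⟨y, rfl⟩)
    simpa [incr, mul_assoc] using incr_le hconj (y * x)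
  obtain ⟨v, -, hv, hv_range⟩ := exists_seq_tendsto_sSup (Set.range_nonempty (incr b)) (incr_bdd b)
  choose u hu using hv_range
  obtain ⟨n, hn⟩ := hreach b hba
  have sup_nonpos : ⨆ x, incr b x ≤ 0 :=
    hf.increment_limit_nonpos hμ0 hμ1 hC hn shifted_le (hv.congr fun k => (hu k).symm)
  exact sub_nonpos.1 ((incr_le mem_conjugatesOf_self x).trans sup_nonpos)

theorem IsHarmonic.apply_mul_eq {E : Type*} [NormedAddCommGroup E] [NormedSpace ℝ E] {f : G → E}
    (hμ0 : ∀ x, 0 ≤ μ x) (hμ1 : HasSum μ 1) (hf : IsHarmonic μ f) {C : ℝ} (hC : ∀ x, ‖f x‖ ≤ C)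
    {a : G} (ha : (conjugatesOf a).Finite)
    (hreach : ∀ b ∈ conjugatesOf a, ∃ n, 0 < convPow μ n b) (x : G) :
    f (a * x) = f x := by
  have dual_le (φ : StrongDual ℝ E) : φ (f (a * x)) ≤ φ (f x) :=
    (hf.continuousLinearMap_comp φ).apply_mul_le hμ0 hμ1
      (fun y => φ.le_opNorm_of_le (hC y)) ha hreach x
  refine (SeparatingDual.eq_iff_forall_dual_eq (R := ℝ)).2 fun φ => (dual_le φ).antisymm ?_
  simpa using dual_le (-φ)

end Increments

section Quotient

variable {Γ : Type*} [Group Γ] {N : Subgroup Γ} [N.Normal]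

theorem exists_comp_mk_eq {α : Type*} {f : Γ → α} (hf : ∀ a ∈ N, ∀ x, f (a * x) = f x) :
    ∃ F : Γ ⧸ N → α, (fun x : Γ => F (QuotientGroup.mk x)) = f := by
  refine ⟨Quotient.lift f fun x y hxy => ?_, rfl⟩
  have hmem : y * x⁻¹ ∈ N := by
    simpa using ‹N.Normal›.conj_mem _ (QuotientGroup.leftRel_apply.1 hxy) x
  simpa using (hf _ hmem x).symm

variable {E : Type*} [NormedAddCommGroup E] [NormedSpace ℝ E] [CompleteSpace E] {μ : Γ → ℝ}
  {F : Γ ⧸ N → E}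

theorem hasSum_pushforward_smul_iff (hμ : Summable μ) (hF : ∃ C : ℝ, ∀ c, ‖F c‖ ≤ C) {v : E} :
    HasSum (fun c => pushforward N μ c • F c) v ↔
      HasSum (fun x => μ x • F (QuotientGroup.mk x)) v := by
  obtain ⟨C, hC⟩ := hF
  have hsum : Summable fun x => μ x • F (QuotientGroup.mk x) := by
    refine .of_norm_bounded (hμ.norm.mul_right C) fun x => ?_
    rw [norm_smul]
    gcongr
    exact hC _
  have hpush : HasSum (fun c => pushforward N μ c • F c)
      (∑' x, μ x • F (QuotientGroup.mk x)) := by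
    let e := Equiv.sigmaFiberEquiv (QuotientGroup.mk : Γ → Γ ⧸ N)
    refine (e.hasSum_iff.2 hsum.hasSum).sigma fun c => ?_
    have fiber := (hμ.subtype {x | (QuotientGroup.mk x : Γ ⧸ N) = c}).hasSum.smul_const (F c)
    exact fiber.congr_fun fun x => congrArg (μ x.1 • F ·) x.2
  exact ⟨fun h => hpush.unique h ▸ hsum.hasSum, fun h => hsum.hasSum.unique h ▸ hpush⟩

theorem isHarmonic_comp_mk_iff (hμ : Summable μ) (hF : ∃ C : ℝ, ∀ c, ‖F c‖ ≤ C) :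
    IsHarmonic μ (fun x => F (QuotientGroup.mk x)) ↔ IsHarmonic (pushforward N μ) F := by
  refine Iff.symm (QuotientGroup.mk_surjective.forall.trans (forall_congr' fun x => ?_))
  exact hasSum_pushforward_smul_iff (F := fun c => F (c * QuotientGroup.mk x)) hμ
    (hF.imp fun C hC c => hC _)

theorem comp_mk_mem_boundedHarmonic_iff (hμ : Summable μ) :
    (fun x => F (QuotientGroup.mk x)) ∈ boundedHarmonic μ E ↔
      F ∈ boundedHarmonic (pushforward N μ) E := by
  have hbdd : (∃ C : ℝ, ∀ x : Γ, ‖F (QuotientGroup.mk x)‖ ≤ C) ↔ ∃ C : ℝ, ∀ c, ‖F c‖ ≤ C :=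
    exists_congr fun C => (QuotientGroup.mk_surjective.forall (p := fun c => ‖F c‖ ≤ C)).symm
  exact (and_congr_left' hbdd).trans (and_congr_right (isHarmonic_comp_mk_iff hμ))

end Quotient

theorem poisson_boundary_of_finite_normal_general
    {Γ : Type*} [Group Γ] (N : Subgroup Γ) [N.Normal]
    (hconj : ∀ a ∈ N, (conjugatesOf a).Finite)
    (E : Type*) [NormedAddCommGroup E] [NormedSpace ℝ E] [CompleteSpace E]
    (μ : Γ → ℝ) (hμ0 : ∀ x, 0 ≤ μ x) (hμ1 : HasSum μ 1)
    (hreach : ∀ a ∈ N, ∃ n, 0 < convPow μ n a) :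
    Set.BijOn (fun (F : Γ ⧸ N → E) => fun x : Γ => F (QuotientGroup.mk x))
      (boundedHarmonic (pushforward N μ) E) (boundedHarmonic μ E) := by
  refine ⟨fun F => (comp_mk_mem_boundedHarmonic_iff hμ1.summable).2,
    QuotientGroup.mk_surjective.injective_comp_right.injOn, ?_⟩
  intro f hf
  have ⟨⟨C, hC⟩, (harmonic : IsHarmonic μ f)⟩ := hf
  have conj_subset {a : Γ} (ha : a ∈ N) : conjugatesOf a ⊆ N :=
    Group.conjugates_subset_normal ha
  have invariant (a : Γ) (ha : a ∈ N) (x : Γ) : f (a * x) = f x :=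
    harmonic.apply_mul_eq hμ0 hμ1 hC (hconj a ha)
      (fun b hb => hreach b (conj_subset ha hb)) x
  obtain ⟨F, rfl⟩ := exists_comp_mk_eq invariant
  exact ⟨F, (comp_mk_mem_boundedHarmonic_iff hμ1.summable).1 hf, rfl⟩

/-- For a finite normal subgroup `N` of a countable discrete group `Γ` and a
generating probability measure `μ` on `Γ`, composition with the quotient map
`π : Γ → Γ/N` is a bijection from bounded `μ̄`-harmonic functions on `Γ/N` onto
bounded `μ`-harmonic functions on `Γ`. -/
theorem poisson_boundary_of_finite_normal
    {Γ : Type*} [Group Γ] [Countable Γ]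
    (N : Subgroup Γ) [N.Normal] [Finite N]
    (μ : Γ → ℝ) (hμ0 : ∀ x, 0 ≤ μ x) (hμ1 : HasSum μ 1)
    (hgen : IsGenerating μ) :
    Set.BijOn (fun (f : Γ ⧸ N → ℂ) => fun x : Γ => f (QuotientGroup.mk x))
      {f : Γ ⧸ N → ℂ | (∃ C : ℝ, ∀ c, ‖f c‖ ≤ C) ∧
        ∀ c : Γ ⧸ N, HasSum (fun d => (pushforward N μ d : ℂ) * f (d * c)) (f c)}
      {f : Γ → ℂ | (∃ C : ℝ, ∀ x, ‖f x‖ ≤ C) ∧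
        ∀ x : Γ, HasSum (fun h => (μ h : ℂ) * f (h * x)) (f x)} := by
  simpa only [boundedHarmonic, IsHarmonic, Complex.real_smul] using
    poisson_boundary_of_finite_normal_general N
      (fun a ha => (Set.toFinite (N : Set Γ)).subset (Group.conjugates_subset_normal ha))
      ℂ μ hμ0 hμ1 (fun a _ => (hgen a).imp fun _ => And.right)
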